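/- Let G be a parity game whose maximal priority is at most h. If h is even, then the set Solve_E(G, h, p_E, p_O) (i) contains every Even-dominion of G of size at most p_E, and (ii) does not intersect any Odd-dominion of G of size at most p_O. Dually, if h is odd, then Solve_O(G, h, p_O, p_E) (i) contains every Odd-dominion of G of size at most p_O, and (ii) does not intersect any Even-dominion of G of size at most p_E. -/

import Mathlib

/-!
Every dominion of a subgame is unfolded into a graph of finite histories consistent with a winning
strategy; all infinite paths of that graph are won. Such a *cover* (`HasCover`) is easier to
manipulate than a history-dependent strategy: restricting to a subgame in which the player's own
moves cannot leave is a restriction of the state space, and combining dominions is a disjoint union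
of state spaces.

Let `P` be the player matching the parity of `h` and `Q` the opponent. By induction on `(h, pOp)`,
`Solve_P` contains small `P`-dominions and avoids small `Q`-dominions.

A small `P`-dominion `D` is disjoint from each removed set: it is disjoint from the `Q`-attractor of
any set disjoint from it, it persists in the subgames `G₁` and `G₃`, and `D ∩ G₂` is a `P`-dominion
of `G₂` because `G₂` is the complement of a `P`-attractor.

Let `D` be a `Q`-dominion of size at most `pOp`, and let `C = D ∩ (W₁ ∪ W₂)`. If `|C| > pOp / 2`,
then the rest of `D` is a `Q`-dominion of `G₃` of size at most `pOp / 2`, so it is contained in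
`W₃`. If `|C| ≤ pOp / 2`, take a maximal `Q`-dominion `B ⊆ C`. It is small, so `B ⊆ W`. Any vertex
of `D` attracted to `B` in one step lies in `W₁`, hence in `B` by maximality; therefore `D \ B` is a
`Q`-dominion of `U \ B`. If it were nonempty, it would contain a nonempty `Q`-dominion `D₀` without
priority `h` (`HasCover.exists_avoiding`: otherwise a play consistent with the strategy would see
`h` infinitely often). The part of `D₀` outside `W₁` is a `Q`-dominion of `G₂`, so it is contained
in `W'`; thus `B ∪ D₀ ⊆ C` is a `Q`-dominion of the game, contradicting maximality. Hence
`D = B ⊆ C`.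
-/

/-- The two players of a parity game. -/
inductive Player where
  | even : Player
  | odd : Player
deriving DecidableEq

/-- The opponent of a player. -/
def Player.opp : Player → Player
  | even => odd
  | odd => even

/-- A natural number has the parity of the given player. -/
def Player.matchesPriority : Player → ℕ → Prop
  | even => fun p => Even p
  | odd => fun p => Odd p

/-- A parity game on a vertex type `V`: an ownership function, an edge relation in which
every vertex has at least one successor, and a priority function. -/
structure ParityGame (V : Type*) where
  owner : V → Player
  edge : V → V → Prop
  priority : V → ℕ
  succ_nonempty : ∀ v, ∃ w, edge v w

namespace ParityGame

variable {V : Type*} (G : ParityGame V)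

/-- A play is an infinite sequence of vertices following edges. -/
def IsPlay (π : ℕ → V) : Prop := ∀ i, G.edge (π i) (π (i + 1))

/-- Priority `p` occurs infinitely often along the play `π`. -/
def InfOften (π : ℕ → V) (p : ℕ) : Prop := ∀ N, ∃ i, N ≤ i ∧ G.priority (π i) = p

/-- A play is winning for a player if the highest priority occurring infinitely often
along it has that player's parity. -/
def WinsPlay (P : Player) (π : ℕ → V) : Prop :=
  ∃ p, G.InfOften π p ∧ (∀ q, G.InfOften π q → q ≤ p) ∧ P.matchesPriority p

/-- A play `π` agrees with the strategy `σ` of player `P` (a strategy maps a history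
together with the current vertex to the next vertex). -/
def Agrees (P : Player) (σ : List V → V → V) (π : ℕ → V) : Prop :=
  ∀ i, G.owner (π i) = P → π (i + 1) = σ (List.ofFn fun j : Fin i => π j) (π i)

/-- `σ` is a valid strategy for player `P`: at `P`'s vertices it prescribes a successor. -/
def ValidFor (P : Player) (σ : List V → V → V) : Prop :=
  ∀ hist v, G.owner v = P → G.edge v (σ hist v)

/-- Player `P` has a winning strategy from vertex `v`. -/
def WinsFrom (P : Player) (v : V) : Prop :=
  ∃ σ, G.ValidFor P σ ∧ ∀ π, π 0 = v → G.IsPlay π → G.Agrees P σ π → G.WinsPlay P π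

/-- The winning region of player `P`. -/
def winningRegion (P : Player) : Set V := {v | G.WinsFrom P v}

/-- Player `P` has a winning strategy from `v` in the subgame induced by the set `D`:
a strategy that at `P`'s vertices of `D` prescribes successors inside `D` and wins
every play that starts at `v`, stays in `D` and agrees with it. -/
def WinsWithinFrom (P : Player) (D : Set V) (v : V) : Prop :=
  ∃ σ : List V → V → V,
    (∀ hist w, w ∈ D → G.owner w = P → σ hist w ∈ D ∧ G.edge w (σ hist w)) ∧
    ∀ π, π 0 = v → G.IsPlay π → (∀ i, π i ∈ D) → G.Agrees P σ π → G.WinsPlay P π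

/-- `D` is a dominion for player `P` in the subgame of `G` induced by the vertex set `U`:
`D ⊆ U`, every `P`-vertex of `D` has a successor in `D`, every opponent vertex of `D`
has all of its successors (within the subgame) in `D`, and `P` wins from every vertex
of `D` in the subgame induced by `D`. -/
def IsDominionIn (P : Player) (U D : Set V) : Prop :=
  D ⊆ U ∧
  (∀ v ∈ D, G.owner v = P → ∃ w ∈ D, G.edge v w) ∧
  (∀ v ∈ D, G.owner v ≠ P → ∀ w ∈ U, G.edge v w → w ∈ D) ∧
  ∀ v ∈ D, G.WinsWithinFrom P D v

/-- `D` is a dominion for player `P` in `G`. -/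
def IsDominion (P : Player) (D : Set V) : Prop := G.IsDominionIn P Set.univ D

/-- The attractor for player `P` of the set `X`, computed in the subgame of `G` induced
by the vertex set `U`: the least set containing `X` such that a `P`-vertex with some
successor in it belongs to it, and an opponent vertex all of whose successors (within
the subgame) are in it belongs to it. -/
inductive AttrIn (P : Player) (U X : Set V) : V → Prop
  | base {v} : v ∈ X → AttrIn P U X v
  | player {v w} : v ∈ U → G.owner v = P → w ∈ U → G.edge v w → AttrIn P U X w →
      AttrIn P U X v
  | opponent {v} : v ∈ U → G.owner v ≠ P → (∀ w ∈ U, G.edge v w → AttrIn P U X w) →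
      AttrIn P U X v

/-- The attractor, within subgame `U`, as a set. -/
def attrIn (P : Player) (U X : Set V) : Set V := {v | G.AttrIn P U X v}

/-- The attractor `Attr_P(X, G)` for player `P` of the set `X` in the whole game `G`. -/
def attractor (P : Player) (X : Set V) : Set V := G.attrIn P Set.univ X

/-- `T` is a trap for player `P`: every `P`-vertex of `T` has all of its successors in
`T`, and every opponent vertex of `T` has at least one successor in `T`. -/
def IsTrap (P : Player) (T : Set V) : Prop :=
  (∀ v ∈ T, G.owner v = P → ∀ w, G.edge v w → w ∈ T) ∧
  (∀ v ∈ T, G.owner v ≠ P → ∃ w ∈ T, G.edge v w)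

end ParityGame

namespace ParityGame

variable {V : Type*}

/-- The recursive procedure `Solve_P(G, h, pMe, pOp)` of the modified Parys algorithm,
computed on the subgame of `G` induced by the current vertex set `U`.  `Solve_E G U h p_E p_O`
is `solve G .even U h p_E p_O` and its dual `Solve_O G U h p_O p_E` is
`solve G .odd U h p_O p_E`. -/
noncomputable def solve (G : ParityGame V) (P : Player) (U : Set V) (h pMe pOp : ℕ) :
    Set V :=
  letI := Classical.propDecidable
  if U = ∅ then ∅
  else if hh : h = 0 then (match P with | .even => U | .odd => ∅)
  else if hp : pOp = 0 then U
  else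
    let W := U \ G.solve P U h pMe (pOp / 2)
    let W1 := G.attrIn P.opp U W
    let G1 := U \ W1
    let Nh := {v ∈ G1 | G.priority v = h}
    let G2 := G1 \ G.attrIn P G1 Nh
    let W' := G.solve P.opp G2 (h - 1) pOp pMe
    let W2 := G.attrIn P.opp G1 W'
    let G3 := G1 \ W2
    let W3 := G3 \ G.solve P G3 h pMe (pOp / 2)
    U \ (W1 ∪ W2 ∪ W3)
termination_by (h, pOp)
decreasing_by
  · exact Prod.Lex.right h (Nat.div_lt_self (Nat.pos_of_ne_zero hp) one_lt_two)
  · exact Prod.Lex.left _ _ (Nat.sub_lt (Nat.pos_of_ne_zero hh) one_pos)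
  · exact Prod.Lex.right h (Nat.div_lt_self (Nat.pos_of_ne_zero hp) one_lt_two)

end ParityGame

universe u

namespace ParityGame

variable {V : Type u} {G : ParityGame V} {P Q : Player} {U D X A : Set V}

/-! ### Players, plays and attractors -/

theorem opp_opp (P : Player) : P.opp.opp = P := by cases P <;> rfl

theorem opp_ne (P : Player) : P.opp ≠ P := by cases P <;> simp [Player.opp]

theorem eq_of_ne_ne {a b c : Player} (h : a ≠ b) (h' : c ≠ b) : a = c := by
  cases a <;> cases b <;> cases c <;> simp_all

theorem matches_opp (P : Player) (n : ℕ) :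
    P.opp.matchesPriority n ↔ ¬ P.matchesPriority n := by
  cases P <;> simp [Player.opp, Player.matchesPriority]

theorem matches_pred {P : Player} {n : ℕ} (hn : n ≠ 0) (h : P.matchesPriority n) :
    P.opp.matchesPriority (n - 1) := by
  obtain ⟨m, rfl⟩ := Nat.exists_eq_succ_of_ne_zero hn
  cases P <;> simp [Player.opp, Player.matchesPriority] at h ⊢ <;> grind

theorem infOften_shift (π : ℕ → V) (n p : ℕ) :
    G.InfOften (fun i => π (i + n)) p ↔ G.InfOften π p := by
  constructor
  · intro h N
    obtain ⟨i, hi, e⟩ := h N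
    exact ⟨i + n, by omega, e⟩
  · intro h N
    obtain ⟨i, hi, e⟩ := h (N + n)
    refine ⟨i - n, by omega, ?_⟩
    have : i - n + n = i := by omega
    simpa [this] using e

theorem winsPlay_shift (π : ℕ → V) (n : ℕ) :
    G.WinsPlay P (fun i => π (i + n)) ↔ G.WinsPlay P π := by
  simp only [WinsPlay, infOften_shift]

/-- The subgame on `U` is well formed: every vertex has a successor inside `U`. -/
def Total (G : ParityGame V) (U : Set V) : Prop := ∀ v ∈ U, ∃ w ∈ U, G.edge v w

theorem Total.diff_attr (h : G.Total U) (P : Player) (X : Set V) :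
    G.Total (U \ G.attrIn P U X) := by
  rintro v ⟨hv, hn⟩
  by_cases ho : G.owner v = P
  · obtain ⟨w, hw, e⟩ := h v hv
    exact ⟨w, ⟨hw, fun hw' => hn (.player hv ho hw e hw')⟩, e⟩
  · by_contra hc
    refine hn (.opponent hv ho fun w hw e => ?_)
    by_contra hw'
    exact hc ⟨w, ⟨hw, hw'⟩, e⟩

theorem subset_attrIn : X ⊆ G.attrIn P U X := fun _ h => .base h

/-! ### Covers of dominions -/

/-- Winning for player `P` on the set `D` in the subgame on `U`, witnessed by a state graph `S`
with transition relation `R` and projection `p` onto `D`. States play the role of histories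
consistent with a strategy: `P` can always continue, every move of the opponent inside `U` is
matched, and every infinite path projects to a play won by `P`. -/
def HasCover (G : ParityGame V) (P : Player) (U D : Set V) : Prop :=
  D ⊆ U ∧ ∃ (S : Type u) (p : S → V) (R : S → S → Prop),
    Set.range p = D ∧
    (∀ s t, R s t → G.edge (p s) (p t)) ∧
    (∀ s, G.owner (p s) = P → ∃ t, R s t) ∧
    (∀ s, G.owner (p s) ≠ P → ∀ w ∈ U, G.edge (p s) w → ∃ t, R s t ∧ p t = w) ∧
    (∀ x : ℕ → S, (∀ i, R (x i) (x (i + 1))) → G.WinsPlay P (fun i => p (x i)))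

/-- A state is a finite prefix (values of `f` up to `n`) of a play inside `D` that agrees with the
strategy chosen for its first vertex. -/
theorem IsDominionIn.hasCover (h : G.IsDominionIn P U D) : G.HasCover P U D := by
  classical
  obtain ⟨hDU, -, hopp, hwin⟩ := h
  refine ⟨hDU, ?_⟩
  choose! σ hσ hσw using hwin
  let S := {s : (ℕ → V) × ℕ // (∀ i ≤ s.2, s.1 i ∈ D) ∧
    ∀ i < s.2, G.edge (s.1 i) (s.1 (i + 1)) ∧ (G.owner (s.1 i) = P →
      s.1 (i + 1) = σ (s.1 0) (List.ofFn fun j : Fin i => s.1 j) (s.1 i))}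
  let R : S → S → Prop := fun s t => t.1.2 = s.1.2 + 1 ∧ ∀ i ≤ s.1.2, t.1.1 i = s.1.1 i
  have ext : ∀ (s : S) (w : V), w ∈ D → G.edge (s.1.1 s.1.2) w →
      (G.owner (s.1.1 s.1.2) = P →
        w = σ (s.1.1 0) (List.ofFn fun j : Fin s.1.2 => s.1.1 j) (s.1.1 s.1.2)) →
      ∃ t, R s t ∧ t.1.1 t.1.2 = w := by
    rintro ⟨⟨f, n⟩, hf, hf'⟩ w hw he hs
    dsimp only at hf hf' he hs
    have hg : ∀ i ≤ n, Function.update f (n + 1) w i = f i := fun i hi =>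
      Function.update_of_ne (by omega) _ _
    have hg' : Function.update f (n + 1) w (n + 1) = w := Function.update_self ..
    generalize Function.update f (n + 1) w = g at hg hg'
    refine ⟨⟨⟨g, n + 1⟩, ?_, ?_⟩, ⟨rfl, hg⟩, hg'⟩
    · intro i hi
      dsimp only at hi ⊢
      rcases Nat.lt_or_ge n i with h | h
      · obtain rfl : i = n + 1 := by omega
        rwa [hg']
      · rw [hg i h]; exact hf i h
    · intro i hi
      dsimp only at hi ⊢
      have hl : (List.ofFn fun j : Fin i => g j) = List.ofFn fun j : Fin i => f j := by
        congr 1; funext j; exact hg j (by omega)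
      rw [hl, hg i (by omega), hg 0 (by omega)]
      rcases Nat.lt_or_ge i n with h | h
      · rw [hg (i + 1) (by omega)]; exact hf' i h
      · obtain rfl : i = n := by omega
        rw [hg']; exact ⟨he, hs⟩
  refine ⟨S, fun s => s.1.1 s.1.2, R, ?_, ?_, ?_, ?_, ?_⟩
  · apply Set.Subset.antisymm
    · rintro _ ⟨s, rfl⟩; exact s.2.1 _ le_rfl
    · intro v hv
      exact ⟨⟨⟨fun _ => v, 0⟩, fun _ _ => hv, fun i hi => absurd hi (Nat.not_lt_zero _)⟩, rfl⟩
  · rintro s t ⟨h1, h2⟩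
    have := (t.2.2 s.1.2 (by omega)).1
    rw [h2 _ le_rfl] at this
    dsimp only
    rwa [h1]
  · intro s ho
    have h := hσ (s.1.1 0) (s.2.1 0 (Nat.zero_le _))
      (List.ofFn fun j : Fin s.1.2 => s.1.1 j) _ (s.2.1 _ le_rfl) ho
    obtain ⟨t, ht, -⟩ := ext s _ h.1 h.2 fun _ => rfl
    exact ⟨t, ht⟩
  · intro s ho w hw he
    exact ext s w (hopp _ (s.2.1 _ le_rfl) ho w hw he) he fun h => absurd h ho
  · intro x hx
    have hn : ∀ k, (x k).1.2 = (x 0).1.2 + k := by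
      intro k
      induction k with
      | zero => rfl
      | succ k ih => rw [(hx k).1, ih]; omega
    have hc : ∀ d k i, i ≤ (x 0).1.2 + k → (x (k + d)).1.1 i = (x k).1.1 i := by
      intro d k i hi
      induction d with
      | zero => rfl
      | succ d ih => rw [← ih]; exact (hx (k + d)).2 i (by rw [hn]; omega)
    -- The diagonal of the prefixes is a play of which every `x k` is a prefix.
    let π : ℕ → V := fun i => (x i).1.1 i
    have hπ : ∀ k i, i ≤ (x 0).1.2 + k → (x k).1.1 i = π i := by
      intro k i hi
      rcases le_total k i with h | h
      · obtain ⟨d, rfl⟩ := Nat.exists_eq_add_of_le h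
        exact (hc d k _ hi).symm
      · obtain ⟨d, rfl⟩ := Nat.exists_eq_add_of_le h
        exact hc d i i (by omega)
    have hw : G.WinsPlay P π := by
      refine hσw (π 0) ((x 0).2.1 0 (Nat.zero_le _)) π rfl ?_ ?_ ?_
      · intro i
        have := ((x (i + 1)).2.2 i (by rw [hn]; omega)).1
        rwa [hπ _ i (by omega), hπ _ (i + 1) (by omega)] at this
      · intro i
        exact (x i).2.1 i (by rw [hn]; omega)
      · intro i ho
        have := ((x (i + 1)).2.2 i (by rw [hn]; omega)).2
        have hl : (List.ofFn fun j : Fin i => (x (i + 1)).1.1 j) =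
            List.ofFn fun j : Fin i => π j := by
          congr 1; funext j; exact hπ _ _ (by omega)
        rw [hl, hπ _ i (by omega), hπ _ (i + 1) (by omega), hπ _ 0 (by omega)] at this
        exact this ho
    rw [← winsPlay_shift π (x 0).1.2] at hw
    convert hw using 2 with k
    dsimp only
    rw [hn, hπ _ _ le_rfl, Nat.add_comm]

namespace HasCover

theorem empty : G.HasCover P U ∅ :=
  ⟨Set.empty_subset _, PEmpty, PEmpty.elim, fun _ _ => False, Set.range_eq_empty _,
    nofun, nofun, nofun, fun x => (x 0).elim⟩

theorem exists_succ (h : G.HasCover P U D) {v : V} (hv : v ∈ D) (ho : G.owner v = P) :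
    ∃ w ∈ D, G.edge v w := by
  obtain ⟨-, S, p, R, rfl, h1, h2, -, -⟩ := h
  obtain ⟨s, rfl⟩ := hv
  obtain ⟨t, ht⟩ := h2 s ho
  exact ⟨p t, ⟨t, rfl⟩, h1 _ _ ht⟩

theorem closed (h : G.HasCover P U D) {v w : V} (hv : v ∈ D) (ho : G.owner v ≠ P)
    (hw : w ∈ U) (he : G.edge v w) : w ∈ D := by
  obtain ⟨-, S, p, R, rfl, -, -, h3, -⟩ := h
  obtain ⟨s, rfl⟩ := hv
  obtain ⟨t, -, rfl⟩ := h3 s ho w hw he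
  exact ⟨t, rfl⟩

theorem attr_disjoint (h : G.HasCover P U D) (hQ : Q ≠ P) (hX : ∀ v ∈ D, v ∉ X) :
    ∀ v ∈ D, v ∉ G.attrIn Q U X := by
  intro v hv ha
  change G.AttrIn Q U X v at ha
  induction ha with
  | base hx => exact hX _ hv hx
  | player hvU ho hw he _ ih => exact ih (h.closed hv (ho ▸ hQ) hw he)
  | opponent hvU ho _ ih =>
    obtain ⟨w, hw, he⟩ := h.exists_succ hv (eq_of_ne_ne ho hQ.symm)
    exact ih w (h.1 hw) he hw

/-- A dominion persists in a subgame that its owner cannot leave from inside the dominion. -/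
theorem restrict (h : G.HasCover P U D) {U' : Set V} (hU : U' ⊆ U)
    (hs : ∀ v ∈ D, v ∈ U' → G.owner v = P → ∀ w ∈ D, G.edge v w → w ∈ U') :
    G.HasCover P U' (D ∩ U') := by
  obtain ⟨hD, S, p, R, rfl, h1, h2, h3, h4⟩ := h
  refine ⟨Set.inter_subset_right, {s : S // p s ∈ U'}, fun s => p s.1, fun s t => R s.1 t.1,
    ?_, fun s t => h1 _ _, ?_, ?_, ?_⟩
  · ext v
    constructor
    · rintro ⟨s, rfl⟩; exact ⟨⟨s.1, rfl⟩, s.2⟩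
    · rintro ⟨⟨s, rfl⟩, hv⟩; exact ⟨⟨s, hv⟩, rfl⟩
  · intro s ho
    obtain ⟨t, ht⟩ := h2 s.1 ho
    exact ⟨⟨t, hs _ ⟨s.1, rfl⟩ s.2 ho _ ⟨t, rfl⟩ (h1 _ _ ht)⟩, ht⟩
  · intro s ho w hw he
    obtain ⟨t, ht, rfl⟩ := h3 s.1 ho w (hU hw) he
    exact ⟨⟨t, hw⟩, ht, rfl⟩
  · intro x hx
    exact h4 (fun i => (x i).1) hx

theorem restrict_of_subset (h : G.HasCover P U D) {U' : Set V} (hU : U' ⊆ U) (hD : D ⊆ U') :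
    G.HasCover P U' D := by
  have := h.restrict hU fun _ _ _ _ w hw _ => hD hw
  rwa [Set.inter_eq_left.2 hD] at this

theorem diff_attr (h : G.HasCover P U D) (X : Set V) :
    G.HasCover P (U \ G.attrIn P U X) (D ∩ (U \ G.attrIn P U X)) :=
  h.restrict Set.sdiff_subset fun _ _ hv ho _ hw he =>
    ⟨h.1 hw, fun ha => hv.2 (.player hv.1 ho (h.1 hw) he ha)⟩

/-- A dominion `A` can be enlarged by the image of a state graph from which every path either stays
in it forever and wins, or can be moved into `A`. -/
theorem union (h : G.HasCover P U A) {S : Type u} (p : S → V) (R : S → S → Prop)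
    (h0 : ∀ s, p s ∈ U) (h1 : ∀ s t, R s t → G.edge (p s) (p t))
    (h2 : ∀ s, G.owner (p s) = P → (∃ t, R s t) ∨ ∃ a ∈ A, G.edge (p s) a)
    (h3 : ∀ s, G.owner (p s) ≠ P → ∀ w ∈ U, G.edge (p s) w → w ∈ A ∨ ∃ t, R s t ∧ p t = w)
    (h4 : ∀ x : ℕ → S, (∀ i, R (x i) (x (i + 1))) → G.WinsPlay P (fun i => p (x i))) :
    G.HasCover P U (A ∪ Set.range p) := by
  obtain ⟨hA, T, q, R', rfl, k1, k2, k3, k4⟩ := h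
  let RR : T ⊕ S → T ⊕ S → Prop := fun a b => match a, b with
    | .inl a, .inl b => R' a b
    | .inr a, .inr b => R a b
    | .inr a, .inl b => G.edge (p a) (q b)
    | .inl _, .inr _ => False
  refine ⟨Set.union_subset hA (Set.range_subset_iff.2 h0), T ⊕ S, Sum.elim q p, RR,
    Set.Sum.elim_range q p, ?_, ?_, ?_, ?_⟩
  · rintro (a | a) (b | b) hab
    · exact k1 _ _ hab
    · exact hab.elim
    · exact hab
    · exact h1 _ _ hab
  · rintro (a | a) ho
    · obtain ⟨t, ht⟩ := k2 a ho
      exact ⟨.inl t, ht⟩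
    · rcases h2 a ho with ⟨t, ht⟩ | ⟨_, ⟨t, rfl⟩, ht⟩
      · exact ⟨.inr t, ht⟩
      · exact ⟨.inl t, ht⟩
  · rintro (a | a) ho w hw he
    · obtain ⟨t, ht, e⟩ := k3 a ho w hw he
      exact ⟨.inl t, ht, e⟩
    · rcases h3 a ho w hw he with ⟨t, rfl⟩ | ⟨t, ht, e⟩
      · exact ⟨.inl t, he, rfl⟩
      · exact ⟨.inr t, ht, e⟩
  · intro x hx
    -- The `inl` part is never left, so a suffix of the path stays in one component.
    by_cases hl : ∃ n a, x n = .inl a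
    · obtain ⟨n, a, hn⟩ := hl
      have : ∀ i, ∃ b, x (i + n) = .inl b := by
        intro i
        induction i with
        | zero => exact ⟨a, by simpa using hn⟩
        | succ i ih =>
          obtain ⟨b, hb⟩ := ih
          have hr := hx (i + n)
          rw [hb] at hr
          rw [show i + 1 + n = i + n + 1 by omega]
          cases hc : x (i + n + 1) with
          | inl c => exact ⟨c, rfl⟩
          | inr c => rw [hc] at hr; exact hr.elim
      choose y hy using this
      rw [← winsPlay_shift _ n]
      have := k4 y fun i => by
        have hr := hx (i + n)
        rw [show i + n + 1 = i + 1 + n by omega, hy, hy] at hr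
        exact hr
      simpa [hy] using this
    · have : ∀ i, ∃ b, x i = .inr b := by
        intro i
        cases hc : x i with
        | inl c => exact absurd ⟨i, c, hc⟩ hl
        | inr c => exact ⟨c, rfl⟩
      choose y hy using this
      have := h4 y fun i => by
        have hr := hx i
        rw [hy, hy] at hr
        exact hr
      simpa [hy] using this

theorem insert (h : G.HasCover P U A) {v : V} (hv : v ∈ U)
    (h2 : G.owner v = P → ∃ a ∈ A, G.edge v a)
    (h3 : G.owner v ≠ P → ∀ w ∈ U, G.edge v w → w ∈ A) : G.HasCover P U (A ∪ {v}) := by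
  have := h.union (S := PUnit) (fun _ => v) (fun _ _ => False) (fun _ => hv)
    (fun _ _ => False.elim) (fun _ ho => .inr (h2 ho)) (fun _ ho w hw he => .inl (h3 ho w hw he))
    (fun _ hx => (hx 0).elim)
  simpa using this

theorem union_diff (h : G.HasCover P U A) (h' : G.HasCover P (U \ A) D) :
    G.HasCover P U (A ∪ D) := by
  obtain ⟨hD, S, p, R, rfl, h1, h2, h3, h4⟩ := h'
  refine h.union p R (fun s => (hD ⟨s, rfl⟩).1) h1 (fun s ho => .inl (h2 s ho)) ?_ h4
  intro s ho w hw he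
  by_cases hwA : w ∈ A
  · exact .inl hwA
  · exact .inr (h3 s ho w ⟨hw, hwA⟩ he)

/-- The target `T` can be reached from the given state in at most `k` steps of `R`. -/
def ReachIn {S : Type u} (R : S → S → Prop) (T : S → Prop) : ℕ → S → Prop
  | 0, s => T s
  | k + 1, s => T s ∨ ∃ t, R s t ∧ ReachIn R T k t

/-- If the maximal priority is lost by `P`, a nonempty `P`-dominion contains a nonempty `P`-dominion
without that priority: otherwise the maximal priority is reachable from every state of the cover,
and some path visits it infinitely often. -/
theorem exists_avoiding (h : G.HasCover P U D) {n : ℕ} (hne : D.Nonempty)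
    (ht : ∀ v ∈ D, G.owner v ≠ P → ∃ w ∈ U, G.edge v w)
    (hn : ∀ v ∈ D, G.priority v ≤ n) (hP : ¬ P.matchesPriority n) :
    ∃ D₀ ⊆ D, D₀.Nonempty ∧ G.HasCover P U D₀ ∧ ∀ v ∈ D₀, G.priority v ≠ n := by
  classical
  obtain ⟨hD, S, p, R, rfl, h1, h2, h3, h4⟩ := h
  have hsucc : ∀ s, ∃ t, R s t := by
    intro s
    by_cases ho : G.owner (p s) = P
    · exact h2 s ho
    · obtain ⟨w, hw, he⟩ := ht _ ⟨s, rfl⟩ ho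
      obtain ⟨t, ht, -⟩ := h3 s ho w hw he
      exact ⟨t, ht⟩
  by_cases hs : ∃ s, ∀ t, Relation.ReflTransGen R s t → G.priority (p t) ≠ n
  · obtain ⟨s, hs⟩ := hs
    refine ⟨Set.range fun t : {t // Relation.ReflTransGen R s t} => p t.1, ?_,
      ⟨p s, ⟨s, .refl⟩, rfl⟩, ⟨?_, {t // Relation.ReflTransGen R s t}, fun t => p t.1,
      fun a b => R a.1 b.1, rfl, fun a b => h1 _ _, ?_, ?_, ?_⟩, ?_⟩
    · rintro _ ⟨t, rfl⟩; exact ⟨t.1, rfl⟩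
    · rintro _ ⟨t, rfl⟩; exact hD ⟨t.1, rfl⟩
    · intro a ho
      obtain ⟨t, ht⟩ := h2 a.1 ho
      exact ⟨⟨t, a.2.tail ht⟩, ht⟩
    · intro a ho w hw he
      obtain ⟨t, ht, e⟩ := h3 a.1 ho w hw he
      exact ⟨⟨t, a.2.tail ht⟩, ht, e⟩
    · intro x hx; exact h4 (fun i => (x i).1) hx
    · rintro _ ⟨t, rfl⟩; exact hs t.1 t.2
  · exfalso
    push Not at hs
    let K : ℕ → S → Prop := ReachIn R fun s => G.priority (p s) = n
    have hK : ∀ s, ∃ k, K k s := by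
      intro s
      obtain ⟨t, ht, e⟩ := hs s
      induction ht using Relation.ReflTransGen.head_induction_on with
      | refl => exact ⟨0, e⟩
      | head hab _ ih =>
        obtain ⟨k, hk⟩ := ih
        exact ⟨k + 1, .inr ⟨_, hab, hk⟩⟩
    have hf : ∀ s, ∃ t, R s t ∧
        (G.priority (p s) ≠ n → ∀ k, K (k + 1) s → (∀ j < k + 1, ¬ K j s) → K k t) := by
      intro s
      by_cases hp : G.priority (p s) = n
      · obtain ⟨t, ht⟩ := hsucc s
        exact ⟨t, ht, fun h => absurd hp h⟩
      · obtain ⟨k, hk, hmin⟩ : ∃ k, K k s ∧ ∀ j < k, ¬ K j s :=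
          ⟨Nat.find (hK s), Nat.find_spec (hK s), fun _ hj => Nat.find_min (hK s) hj⟩
        cases k with
        | zero => exact absurd hk hp
        | succ k =>
          rcases hk with hk | ⟨t, ht, hk⟩
          · exact absurd hk hp
          · refine ⟨t, ht, fun _ k' hk' hm' => ?_⟩
            obtain rfl : k' = k := by
              by_contra hne
              rcases Nat.lt_or_gt_of_ne hne with hlt | hlt
              · exact hmin (k' + 1) (by omega) hk'
              · exact hm' (k + 1) (by omega) (.inr ⟨t, ht, hk⟩)
            exact hk
    choose f hfR hfK using hf
    have hreach : ∀ k s, K k s → ∃ i, G.priority (p (f^[i] s)) = n := by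
      intro k
      induction k using Nat.strong_induction_on with
      | _ k ih =>
        intro s hk
        by_cases hp : G.priority (p s) = n
        · exact ⟨0, hp⟩
        by_cases hm : ∃ j < k, K j s
        · obtain ⟨j, hj, hjs⟩ := hm
          exact ih j hj s hjs
        cases k with
        | zero => exact absurd hk hp
        | succ k =>
          push Not at hm
          obtain ⟨i, hi⟩ := ih k (by omega) (f s) (hfK s hp k hk hm)
          exact ⟨i + 1, hi⟩
    obtain ⟨_, s, rfl⟩ := hne
    obtain ⟨m, hm, hmax, hmP⟩ := h4 (fun i => f^[i] s) fun i => by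
      rw [Function.iterate_succ_apply']; exact hfR _
    have hinf : G.InfOften (fun i => p (f^[i] s)) n := by
      intro N
      obtain ⟨k, hk⟩ := hK (f^[N] s)
      obtain ⟨i, hi⟩ := hreach k _ hk
      refine ⟨i + N, by omega, ?_⟩
      change G.priority (p (f^[i + N] s)) = n
      rw [Function.iterate_add_apply]; exact hi
    obtain ⟨i, -, hi⟩ := hm 0
    have h5 : G.priority (p (f^[i] s)) ≤ n := hn _ ⟨f^[i] s, rfl⟩
    change G.priority (p (f^[i] s)) = m at hi
    have h6 := hmax _ hinf
    obtain rfl : m = n := by omega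
    exact hP hmP

end HasCover

/-! ### Correctness of one round of the recursion -/

/-- Correctness of a set `Y`, as an answer for player `P` in the subgame on `U`, with respect to
`P`-dominions of size at most `a` and opponent dominions of size at most `b`. -/
def Correct (G : ParityGame V) (P : Player) (U : Set V) (a b : ℕ) (Y : Set V) : Prop :=
  (∀ D, G.HasCover P U D → D.ncard ≤ a → D ⊆ Y) ∧
  (∀ D, G.HasCover P.opp U D → D.ncard ≤ b → ∀ v ∈ D, v ∉ Y)

section Round

variable [Finite V] {h a b : ℕ} {Y₁ W₁ G₁ G₂ W' W₂ G₃ Y₃ : Set V}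

theorem round_subset (hY₁ : G.Correct P U a (b / 2) Y₁)
    (hW₁ : W₁ = G.attrIn P.opp U (U \ Y₁)) (hG₁ : G₁ = U \ W₁)
    (hG₂ : G₂ = G₁ \ G.attrIn P G₁ {v ∈ G₁ | G.priority v = h})
    (hW' : G.Correct P.opp G₂ b a W') (hW'G : W' ⊆ G₂)
    (hW₂ : W₂ = G.attrIn P.opp G₁ W') (hG₃ : G₃ = G₁ \ W₂)
    (hY₃ : G.Correct P G₃ a (b / 2) Y₃) (hD : G.HasCover P U D) (hc : D.ncard ≤ a) :
    D ⊆ U \ (W₁ ∪ W₂ ∪ (G₃ \ Y₃)) := by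
  have d1 : ∀ v ∈ D, v ∉ W₁ := by
    rw [hW₁]
    exact hD.attr_disjoint (opp_ne P) fun v hv hv' => hv'.2 (hY₁.1 D hD hc hv)
  have D1 : G.HasCover P G₁ D := hD.restrict_of_subset (hG₁ ▸ Set.sdiff_subset)
    (hG₁ ▸ fun v hv => ⟨hD.1 hv, d1 v hv⟩)
  have D2 : G.HasCover P G₂ (D ∩ G₂) := hG₂ ▸ D1.diff_attr _
  have d2 : ∀ v ∈ D, v ∉ W₂ := by
    rw [hW₂]
    refine D1.attr_disjoint (opp_ne P) fun v hv hv' => ?_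
    exact hW'.2 (D ∩ G₂) ((opp_opp P).symm ▸ D2)
      ((Set.ncard_le_ncard Set.inter_subset_left).trans hc) v ⟨hv, hW'G hv'⟩ hv'
  have D3 : G.HasCover P G₃ D := D1.restrict_of_subset (hG₃ ▸ Set.sdiff_subset)
    (hG₃ ▸ fun v hv => ⟨D1.1 hv, d2 v hv⟩)
  have d3 := hY₃.1 D D3 hc
  rintro v hv
  refine ⟨hD.1 hv, ?_⟩
  rintro ((h | h) | h)
  · exact d1 v hv h
  · exact d2 v hv h
  · exact h.2 (d3 hv)

theorem round_disjoint (hprio : ∀ v ∈ U, G.priority v ≤ h)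
    (hP : P.matchesPriority h) (hY₁ : G.Correct P U a (b / 2) Y₁)
    (hW₁ : W₁ = G.attrIn P.opp U (U \ Y₁)) (hG₁ : G₁ = U \ W₁)
    (hG₂ : G₂ = G₁ \ G.attrIn P G₁ {v ∈ G₁ | G.priority v = h})
    (hW' : G.Correct P.opp G₂ b a W')
    (hW₂ : W₂ = G.attrIn P.opp G₁ W') (hG₃ : G₃ = G₁ \ W₂)
    (hY₃ : G.Correct P G₃ a (b / 2) Y₃) (hD : G.HasCover P.opp U D) (hc : D.ncard ≤ b) :
    ∀ v ∈ D, v ∉ U \ (W₁ ∪ W₂ ∪ (G₃ \ Y₃)) := by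
  let C := D ∩ (W₁ ∪ W₂)
  rcases Nat.lt_or_ge (b / 2) C.ncard with hC | hC
  · have D1 : G.HasCover P.opp G₁ (D ∩ G₁) := by
      rw [hG₁, hW₁]; exact hD.diff_attr _
    have D3 : G.HasCover P.opp G₃ (D ∩ G₁ ∩ G₃) := by
      rw [hG₃, hW₂]; exact D1.diff_attr _
    have hcard : (D ∩ G₁ ∩ G₃).ncard + C.ncard ≤ D.ncard := by
      rw [← Set.ncard_union_eq]
      · refine Set.ncard_le_ncard ?_
        rintro v (hv | hv)
        · exact hv.1.1
        · exact hv.1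
      · rw [Set.disjoint_left]
        rintro v ⟨⟨-, h1⟩, h3⟩ ⟨-, h | h⟩
        · rw [hG₁] at h1; exact h1.2 h
        · rw [hG₃] at h3; exact h3.2 h
    have key := hY₃.2 _ D3 (by omega)
    rintro v hv ⟨hvU, hvn⟩
    simp only [Set.mem_union, not_or] at hvn
    have g1 : v ∈ G₁ := hG₁ ▸ ⟨hvU, hvn.1.1⟩
    have g3 : v ∈ G₃ := hG₃ ▸ ⟨g1, hvn.1.2⟩
    exact hvn.2 ⟨g3, key v ⟨⟨hv, g1⟩, g3⟩⟩
  · obtain ⟨B, ⟨hB, hBC⟩, hmax⟩ := (Set.toFinite {B | G.HasCover P.opp U B ∧ B ⊆ C}).exists_maximal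
      ⟨∅, HasCover.empty, Set.empty_subset _⟩
    have hBW : B ⊆ U \ Y₁ := fun v hv =>
      ⟨hB.1 hv, hY₁.2 B hB ((Set.ncard_le_ncard hBC).trans hC) v hv⟩
    have hBW₁ : B ⊆ W₁ := hW₁ ▸ hBW.trans subset_attrIn
    -- Vertices of `D` attracted to `B` in one step already lie in `B`.
    have hatt : ∀ v ∈ D, v ∈ W₁ → (G.owner v = P.opp → ∃ w ∈ B, G.edge v w) →
        (G.owner v ≠ P.opp → ∀ w ∈ U, G.edge v w → w ∈ B) → v ∈ B := by
      intro v hv hvW h2 h3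
      exact hmax ⟨hB.insert (hD.1 hv) h2 h3, Set.union_subset hBC
        (Set.singleton_subset_iff.2 ⟨hv, .inl hvW⟩)⟩ Set.subset_union_left (.inr rfl)
    have hown : ∀ v ∈ D, v ∉ B → G.owner v = P.opp → ∀ w ∈ U, G.edge v w → w ∉ B := by
      intro v hv hvB ho w hw he hwB
      refine hvB (hatt v hv ?_ (fun _ => ⟨w, hwB, he⟩) fun hn => absurd ho hn)
      rw [hW₁] at hBW₁ ⊢
      exact .player (hD.1 hv) ho hw he (hBW₁ hwB)
    have hother : ∀ v ∈ D, v ∉ B → G.owner v ≠ P.opp → ∃ w ∈ U \ B, G.edge v w := by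
      intro v hv hvB ho
      by_contra hcon
      have hall : ∀ w ∈ U, G.edge v w → w ∈ B := fun w hw he => by
        by_contra hwB
        exact hcon ⟨w, ⟨hw, hwB⟩, he⟩
      refine hvB (hatt v hv ?_ (fun h => absurd h ho) fun _ => hall)
      rw [hW₁] at hBW₁ ⊢
      exact .opponent (hD.1 hv) ho fun w hw he => hBW₁ (hall w hw he)
    have DB : G.HasCover P.opp (U \ B) (D ∩ (U \ B)) :=
      hD.restrict Set.sdiff_subset fun v hv hv' ho w hw he =>
        ⟨hD.1 hw, hown v hv hv'.2 ho w (hD.1 hw) he⟩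
    have hsub : D ⊆ B := by
      by_contra hnot
      obtain ⟨v, hv, hvB⟩ := Set.not_subset.1 hnot
      obtain ⟨D₀, hD₀, ⟨v₀, hv₀⟩, hcov, hav⟩ := DB.exists_avoiding (n := h)
        ⟨v, hv, hD.1 hv, hvB⟩ (fun w hw ho => hother w hw.1 hw.2.2 ho)
        (fun w hw => hprio w hw.2.1) (by rw [matches_opp]; exact not_not.2 hP)
      have E1 : G.HasCover P.opp G₁ (D₀ ∩ G₁) := by
        refine hcov.restrict (hG₁ ▸ Set.sdiff_subset_sdiff_right hBW₁) ?_
        intro x hx hx1 ho w hw he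
        have hxU := (hcov.1 hx).1
        have hwU := (hcov.1 hw).1
        rw [hG₁] at hx1 ⊢
        refine ⟨hwU, fun hwW => hx1.2 ?_⟩
        rw [hW₁] at hwW ⊢
        exact .player hxU ho hwU he hwW
      have E2 : G.HasCover P.opp G₂ (D₀ ∩ G₁) := by
        refine E1.restrict_of_subset (hG₂ ▸ Set.sdiff_subset) fun x hx => ?_
        rw [hG₂]
        exact ⟨hx.2, E1.attr_disjoint (opp_ne P).symm (fun y hy hy' => hav y hy.1 hy'.2) x hx⟩
      have hsz : (D₀ ∩ G₁).ncard ≤ b :=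
        (Set.ncard_le_ncard fun x hx => (hD₀ hx.1).1).trans hc
      have hsW' := hW'.1 _ E2 hsz
      have hD₀C : D₀ ⊆ C := by
        intro x hx
        refine ⟨(hD₀ hx).1, ?_⟩
        by_cases hx1 : x ∈ W₁
        · exact .inl hx1
        · right
          rw [hW₂]
          exact .base (hsW' ⟨hx, hG₁ ▸ ⟨(hcov.1 hx).1, hx1⟩⟩)
      have := hmax ⟨hB.union_diff hcov, Set.union_subset hBC hD₀C⟩ Set.subset_union_left
        (.inr hv₀)
      exact (hD₀ hv₀).2.2 this
    intro v hv hv'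
    exact hv'.2 (.inl (hBC (hsub hv)).2)

end Round

/-! ### The recursion -/

theorem solve_subset (G : ParityGame V) (P : Player) (U : Set V) (h a b : ℕ) :
    G.solve P U h a b ⊆ U := by
  rw [solve.eq_def]
  split_ifs
  · exact Set.empty_subset _
  · cases P
    · exact subset_rfl
    · exact Set.empty_subset _
  · exact subset_rfl
  · exact Set.sdiff_subset

theorem solve_correct_aux [Finite V] (G : ParityGame V) : ∀ (h b : ℕ) (P : Player) (U : Set V)
    (a : ℕ), P.matchesPriority h → G.Total U → (∀ v ∈ U, G.priority v ≤ h) →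
    G.Correct P U a b (G.solve P U h a b) := by
  intro h
  induction h using Nat.strong_induction_on with
  | _ h ihh =>
  intro b
  induction b using Nat.strong_induction_on with
  | _ b ihb =>
  intro P U a hP hU hprio
  by_cases hUe : U = ∅
  · have : ∀ Q D, G.HasCover Q U D → D = ∅ := fun Q D hD => Set.subset_eq_empty hD.1 hUe
    exact ⟨fun D hD _ => by rw [this _ D hD]; exact Set.empty_subset _,
      fun D hD _ => by rw [this _ D hD]; simp⟩
  by_cases hh : h = 0
  · subst hh
    have hs : G.solve P U 0 a b = U := by
      cases P
      · rw [solve.eq_def]; simp [eq_comm]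
      · simp [Player.matchesPriority] at hP
    rw [hs]
    refine ⟨fun D hD _ => hD.1, fun D hD _ v hv _ => ?_⟩
    obtain ⟨D₀, hD₀, ⟨w, hw⟩, -, hav⟩ := hD.exists_avoiding (n := 0) ⟨v, hv⟩
      (fun w hw _ => hU w (hD.1 hw)) (fun w hw => hprio w (hD.1 hw))
      (by rw [matches_opp]; exact not_not.2 hP)
    have := hprio w (hD.1 (hD₀ hw))
    exact hav w hw (by omega)
  by_cases hb : b = 0
  · subst hb
    have hs : G.solve P U h a 0 = U := by
      rw [solve.eq_def]; simp [hh, eq_comm]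
    rw [hs]
    refine ⟨fun D hD _ => hD.1, fun D _ hc v hv _ => ?_⟩
    have := (Set.ncard_eq_zero (Set.toFinite D)).1 (Nat.le_zero.1 hc)
    rw [this] at hv
    exact hv
  rw [solve.eq_def]
  simp only [hUe, hh, hb, if_false, dif_neg, not_false_eq_true]
  have hlt : b / 2 < b := Nat.div_lt_self (Nat.pos_of_ne_zero hb) one_lt_two
  have c1 := ihb (b / 2) hlt P U a hP hU hprio
  set Y₁ := G.solve P U h a (b / 2)
  set W₁ := G.attrIn P.opp U (U \ Y₁) with hW₁
  set G₁ := U \ W₁ with hG₁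
  have t1 : G.Total G₁ := hU.diff_attr _ _
  set G₂ := G₁ \ G.attrIn P G₁ {v ∈ G₁ | G.priority v = h} with hG₂
  have t2 : G.Total G₂ := t1.diff_attr _ _
  have c2 := ihh (h - 1) (by omega) a P.opp G₂ b (matches_pred hh hP) t2 (by
    intro v hv
    have h1 := hprio v hv.1.1
    have h2 : G.priority v ≠ h := fun e => hv.2 (.base ⟨hv.1, e⟩)
    omega)
  have s2 := solve_subset G P.opp G₂ (h - 1) b a
  set W' := G.solve P.opp G₂ (h - 1) b a
  set W₂ := G.attrIn P.opp G₁ W' with hW₂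
  set G₃ := G₁ \ W₂ with hG₃
  have t3 : G.Total G₃ := t1.diff_attr _ _
  have c3 := ihb (b / 2) hlt P G₃ a hP t3 fun v hv => hprio v hv.1.1
  set Y₃ := G.solve P G₃ h a (b / 2)
  exact ⟨fun D hD hc => round_subset c1 hW₁ hG₁ hG₂ c2 s2 hW₂ hG₃ c3 hD hc,
    fun D hD hc => round_disjoint hprio hP c1 hW₁ hG₁ hG₂ c2 hW₂ hG₃ c3 hD hc⟩

end ParityGame

/-- Correctness of the modified recursive procedures: for a game of
maximal priority at most `h`, if `h` is even then `Solve_E(G, h, p_E, p_O)` contains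
every Even-dominion of size at most `p_E` and does not intersect any Odd-dominion of
size at most `p_O`; dually, if `h` is odd then `Solve_O(G, h, p_O, p_E)` contains every
Odd-dominion of size at most `p_O` and does not intersect any Even-dominion of size at
most `p_E`. -/
theorem solve_correct {V : Type*} [Finite V] (G : ParityGame V) (h pE pO : ℕ)
    (hmax : ∀ v : V, G.priority v ≤ h) :
    (Even h →
      (∀ D : Set V, G.IsDominion .even D → D.ncard ≤ pE →
        D ⊆ G.solve .even Set.univ h pE pO) ∧
      (∀ D : Set V, G.IsDominion .odd D → D.ncard ≤ pO →
        D ∩ G.solve .even Set.univ h pE pO = ∅)) ∧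
    (Odd h →
      (∀ D : Set V, G.IsDominion .odd D → D.ncard ≤ pO →
        D ⊆ G.solve .odd Set.univ h pO pE) ∧
      (∀ D : Set V, G.IsDominion .even D → D.ncard ≤ pE →
        D ∩ G.solve .odd Set.univ h pO pE = ∅)) := by
  have ht : G.Total Set.univ := fun v _ => by
    obtain ⟨w, hw⟩ := G.succ_nonempty v
    exact ⟨w, trivial, hw⟩
  constructor
  · intro he
    have key := G.solve_correct_aux h pO .even Set.univ pE he ht fun v _ => hmax v
    refine ⟨fun D hD hc => key.1 D hD.hasCover hc, fun D hD hc => ?_⟩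
    exact Set.eq_empty_of_forall_notMem fun v hv => key.2 D hD.hasCover hc v hv.1 hv.2
  · intro ho
    have key := G.solve_correct_aux h pE .odd Set.univ pO ho ht fun v _ => hmax v
    refine ⟨fun D hD hc => key.1 D hD.hasCover hc, fun D hD hc => ?_⟩
    exact Set.eq_empty_of_forall_notMem fun v hv => key.2 D hD.hasCover hc v hv.1 hv.2
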